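/- (Webb's Theorem.) Let W₁, W₂ ∈ ℂ[x₁,…,xₙ] be nondegenerate quasihomogeneous polynomials with the same ordered weights (q₁,…,qₙ), all in (0,1). If the homogeneous component of the Milnor ring Q_{W₁} of weighted degree 1 is zero (no nonzero element of Q_{W₁} has weighted degree 1), then Q_{W₁} and Q_{W₂} are isomorphic as ℂ-algebras (equivalently, W₁ and W₂ are equivalent singularities). -/

import Mathlib

open MvPolynomial
open scoped TensorProduct

noncomputable section

namespace LG

variable {σ : Type*} [Fintype σ] [DecidableEq σ]

/-- The Jacobian ideal of a polynomial `W`, generated by its partial derivatives. -/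
def jacobianIdeal (W : MvPolynomial σ ℂ) : Ideal (MvPolynomial σ ℂ) :=
  Ideal.span (Set.range fun i => pderiv i W)

/-- The Milnor ring (local algebra) `Q_W = ℂ[x]/(∂W/∂x₁,…,∂W/∂xₙ)`. -/
abbrev MilnorRing (W : MvPolynomial σ ℂ) :=
  MvPolynomial σ ℂ ⧸ jacobianIdeal W

/-- The canonical projection onto the Milnor ring. -/
def mkQ (W : MvPolynomial σ ℂ) : MvPolynomial σ ℂ →ₐ[ℂ] MilnorRing W :=
  Ideal.Quotient.mkₐ ℂ (jacobianIdeal W)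

/-- `W` is quasihomogeneous with (positive rational) weights `q`:
every monomial `x^a` occurring in `W` satisfies `∑ i, a i * q i = 1`. -/
def IsQuasiHomogeneous (W : MvPolynomial σ ℂ) (q : σ → ℚ) : Prop :=
  (∀ i, 0 < q i) ∧ ∀ a ∈ W.support, ∑ i, (a i : ℚ) * q i = 1

/-- `W` is nondegenerate: the origin is the only common zero of its partial
derivatives. -/
def Nondegenerate (W : MvPolynomial σ ℂ) : Prop :=
  ∀ x : σ → ℂ, (∀ i, eval x (pderiv i W) = 0) → x = 0

/-- `W` is admissible with weights `q`: nondegenerate, quasihomogeneous with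
uniquely determined weights, and without cross-term monomials `xᵢxⱼ` (`i ≠ j`). -/
def Admissible (W : MvPolynomial σ ℂ) (q : σ → ℚ) : Prop :=
  Nondegenerate W ∧ IsQuasiHomogeneous W q ∧
    (∀ q', IsQuasiHomogeneous W q' → q' = q) ∧
    ∀ a ∈ W.support, ∀ i j, i ≠ j → a ≠ Finsupp.single i 1 + Finsupp.single j 1

/-- The Hessian of `W`: the determinant of the matrix of second partial
derivatives. -/
def hess (W : MvPolynomial σ ℂ) : MvPolynomial σ ℂ :=
  Matrix.det (Matrix.of fun i j => pderiv i (pderiv j W))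

/-- The homogeneous component of the Milnor ring of weighted degree `d`:
the image in `Q_W` of the span of the monomials of weighted degree `d`. -/
def gradedPiece (W : MvPolynomial σ ℂ) (q : σ → ℚ) (d : ℚ) :
    Submodule ℂ (MilnorRing W) :=
  (weightedHomogeneousSubmodule ℂ q d).map (mkQ W).toLinearMap

/-- The top weighted degree `∑ᵢ (1 - 2qᵢ)` of the Milnor ring. -/
def topDegree (q : σ → ℚ) : ℚ := ∑ i, (1 - 2 * q i)

/-- The part of the Milnor ring of weighted degree below the top degree. -/
def belowTop (W : MvPolynomial σ ℂ) (q : σ → ℚ) : Submodule ℂ (MilnorRing W) :=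
  ⨆ (d : ℚ) (_ : d < topDegree q), gradedPiece W q d

/-- `p` is the pairing of the Milnor ring of `W`: the top weighted-degree
homogeneous component of `a * b` equals `(p a b / μ) • [Hess W]`, i.e.
`a * b - (p a b / μ) • [Hess W]` lies in the part of degree `< topDegree q`. -/
def IsMilnorPairing (W : MvPolynomial σ ℂ) (q : σ → ℚ)
    (p : MilnorRing W → MilnorRing W → ℂ) : Prop :=
  ∀ a b : MilnorRing W,
    a * b - (p a b / (Module.finrank ℂ (MilnorRing W) : ℂ)) • mkQ W (hess W)
      ∈ belowTop W q

/-- The rescaling substitution `xᵢ ↦ ζᵢ · xᵢ`. -/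
def scaleVars (ζ : σ → ℂ) : MvPolynomial σ ℂ →ₐ[ℂ] MvPolynomial σ ℂ :=
  aeval fun i => C (ζ i) * X i

/-- `φ : Q_W → Q_V` is equivariant for the diagonal symmetry `ζ`, expressed on
representatives: the action of `ζ` sends the class of `p` to
`det ζ • [p ∘ ζ]`, and `φ` intertwines the two actions. -/
def EquivariantAt (W V : MvPolynomial σ ℂ)
    (φ : MilnorRing W → MilnorRing V) (ζ : σ → ℂ) : Prop :=
  ∀ p r : MvPolynomial σ ℂ, φ (mkQ W p) = mkQ V r →
    φ ((∏ i, ζ i) • mkQ W (scaleVars ζ p)) = (∏ i, ζ i) • mkQ V (scaleVars ζ r)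

/-- `φ : Q_W → Q_V` preserves the weighted grading. -/
def PreservesGrading {σ τ : Type*} [Fintype σ] [DecidableEq σ]
    [Fintype τ] [DecidableEq τ]
    {W : MvPolynomial σ ℂ} {V : MvPolynomial τ ℂ}
    (φ : MilnorRing W → MilnorRing V) (qW : σ → ℚ) (qV : τ → ℚ) : Prop :=
  ∀ d : ℚ, ∀ a ∈ gradedPiece W qW d, φ a ∈ gradedPiece V qV d

/-- `φ : Q_W → Q_V` preserves the pairings: `⟨a,b⟩_{Q_W} = ⟨φ a, φ b⟩_{Q_V}`. -/
def PreservesPairings {σ τ : Type*} [Fintype σ] [DecidableEq σ]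
    [Fintype τ] [DecidableEq τ]
    {W : MvPolynomial σ ℂ} {V : MvPolynomial τ ℂ}
    (φ : MilnorRing W → MilnorRing V) (qW : σ → ℚ) (qV : τ → ℚ) : Prop :=
  ∀ pW pV, IsMilnorPairing W qW pW → IsMilnorPairing V qV pV →
    ∀ a b, pW a b = pV (φ a) (φ b)

end LG

open LG

/-! The partial derivatives of a nondegenerate `W` have the origin as their only common zero, so
they form a regular sequence of homogeneous elements of degrees `1 - qᵢ`. The Hilbert function of
`Q_W` therefore depends only on the weights, and the degree-one part of `Q_{W₂}` vanishes along
with that of `Q_{W₁}`.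

The vanishing says that every polynomial of weighted degree one is `∑ᵢ vᵢ ∂W/∂xᵢ` for a vector
field `v` of weighted degree zero: the orbit of `W` under weight-preserving coordinate changes has
the whole space of degree-one polynomials as tangent space, so it contains a neighbourhood of `W`.
On the pencil `W₁ + t (W₂ - W₁)` this holds for `t = 0` and `t = 1`, hence off a finite set of
complex `t` avoiding both. The complement of that set is connected, so `W₁` and `W₂` lie in one
orbit, and a coordinate change taking `W₁` to `W₂` identifies their Milnor rings. -/

namespace LG

section RegularSequences

open RingTheory.Sequence IsLocalRing CategoryTheory Abelian

universe u

variable {R : Type u} [CommRing R]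

theorem exists_mem_forall_add_notMem {P : Set (Ideal R)} (hP : P.Finite)
    (hprime : ∀ p ∈ P, p.IsPrime) {x : R} {I : Ideal R}
    (h : ∀ p ∈ P, x ∈ p → ¬ I ≤ p) : ∃ y ∈ I, ∀ p ∈ P, x + y ∉ p := by
  classical
  let maximals : Set (Ideal R) := {p | Maximal (· ∈ P) p}
  have hmax : maximals.Finite := hP.subset fun p hp => hp.prop
  let good : Finset (Ideal R) := hmax.toFinset.filter (x ∉ ·)
  have mem_good {p : Ideal R} : p ∈ good ↔ Maximal (· ∈ P) p ∧ x ∉ p := by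
    simp [good, maximals]
  obtain ⟨y, ⟨hyI, hygood⟩, hybad⟩ : ∃ y ∈ I ⊓ good.inf id, ∀ p ∈ maximals, x ∈ p → y ∉ p := by
    by_contra! hcover
    have hunion : (↑(I ⊓ good.inf id) : Set R) ⊆ ⋃ p ∈ {p ∈ maximals | x ∈ p}, (id p : Set R) :=
      fun y hy => by
        obtain ⟨p, hp, hxp, hyp⟩ := hcover y hy
        exact Set.mem_biUnion (show p ∈ {p ∈ maximals | x ∈ p} from ⟨hp, hxp⟩) hyp
    obtain ⟨p, ⟨hpmax, hxp⟩, hle⟩ := (Ideal.subset_union_prime_finite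
      (hmax.subset (Set.sep_subset maximals (x ∈ ·))) ⊥ ⊥
      fun p hp _ _ => hprime p hp.1.prop).mp hunion
    have := hprime p hpmax.prop
    rcases this.inf_le.mp hle with hI | hgood
    · exact h p hpmax.prop hxp hI
    · obtain ⟨p', hp', hp'p⟩ := this.inf_le'.mp hgood
      rw [mem_good] at hp'
      exact hp'.2 (hp'.1.le_of_ge hpmax.prop hp'p hxp)
  refine ⟨y, hyI, fun p hp hxy => ?_⟩
  obtain ⟨p', hpp', hp'⟩ := hP.exists_le_maximal hp
  by_cases hx : x ∈ p'
  · exact hybad p' hp' hx ((p'.add_mem_iff_right hx).mp (hpp' hxy))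
  · have hy : y ∈ p' := Finset.inf_le (f := id) (mem_good.mpr ⟨hp', hx⟩) hygood
    exact hx ((p'.add_mem_iff_left hy).mp (hpp' hxy))

theorem exists_mem_isSMulRegular_add [IsNoetherianRing R] {M : Type*} [AddCommGroup M] [Module R M]
    [Module.Finite R M] {x : R} {I : Ideal R}
    (h : ∃ a ∈ Ideal.span {x} ⊔ I ⊔ Module.annihilator R M, IsSMulRegular M a) :
    ∃ y ∈ I, IsSMulRegular M (x + y) := by
  obtain ⟨a, ha, hareg⟩ := h
  have regular_iff (b : R) : IsSMulRegular M b ↔ ∀ p ∈ associatedPrimes R M, b ∉ p := by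
    have := Set.ext_iff.mp (biUnion_associatedPrimes_eq_compl_regular R M) b
    simpa using not_congr this.symm
  simp only [regular_iff] at hareg ⊢
  refine exists_mem_forall_add_notMem (associatedPrimes.finite R M) (fun p hp => hp.isPrime)
    fun p hp hxp hIp => hareg p hp (sup_le (sup_le ?_ hIp) ?_ ha)
  · rwa [Ideal.span_singleton_le_iff_mem]
  · simpa only [Submodule.annihilator_top] using IsAssociatedPrime.annihilator_le hp

theorem isWeaklyRegular_cons_of_add [IsLocalRing R] {M : Type*} [AddCommGroup M] [Module R M]
    [IsNoetherian R M] {x y : R} {rs : List R} (hy : y ∈ Ideal.ofList rs)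
    (hrs : ∀ r ∈ x :: rs, r ∈ maximalIdeal R) (h : IsWeaklyRegular M ((x + y) :: rs)) :
    IsWeaklyRegular M (x :: rs) := by
  have hy' : y ∈ maximalIdeal R :=
    Ideal.span_le.mpr (fun r hr => hrs r (List.mem_cons_of_mem _ hr)) hy
  have hx : x ∈ maximalIdeal R := hrs x List.mem_cons_self
  have hlast : IsWeaklyRegular M (rs ++ [x + y]) :=
    isWeaklyRegular_of_perm_of_subset_maximalIdeal h (List.perm_append_singleton _ _).symm <|
      List.forall_mem_cons.mpr ⟨add_mem hx hy', fun r hr => hrs r (List.mem_cons_of_mem _ hr)⟩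
  refine isWeaklyRegular_of_perm_of_subset_maximalIdeal (rs := rs ++ [x]) ?_
    (List.perm_append_singleton _ _)
    fun r hr => hrs r ((List.perm_append_singleton _ _).mem_iff.mp hr)
  rw [isWeaklyRegular_append_iff, isWeaklyRegular_singleton_iff,
    isSMulRegular_iff_right_eq_zero_of_smul] at hlast ⊢
  refine ⟨hlast.1, fun m hm => hlast.2 m ?_⟩
  have hym : y • m = 0 := by
    obtain ⟨m, rfl⟩ := Submodule.mkQ_surjective _ m
    exact (Submodule.Quotient.mk_eq_zero _).mpr (Submodule.smul_mem_smul hy trivial)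
  rw [add_smul, hm, hym, add_zero]

theorem annihilator_sup_span_le_annihilator_quotSMulTop {M : Type*} [AddCommGroup M]
    [Module R M] (x : R) :
    Module.annihilator R M ⊔ Ideal.span {x} ≤ Module.annihilator R (QuotSMulTop x M) := by
  refine sup_le (LinearMap.annihilator_le_of_surjective _ (Submodule.mkQ_surjective _)) ?_
  rw [Ideal.span_singleton_le_iff_mem, Module.mem_annihilator]
  intro m
  obtain ⟨m, rfl⟩ := Submodule.mkQ_surjective _ m
  exact (Submodule.Quotient.mk_eq_zero _).mpr (Submodule.smul_mem_pointwise_smul _ _ _ trivial)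

theorem subsingleton_ext_quotSMulTop {M : Type u} [AddCommGroup M] [Module R M]
    {N : ModuleCat.{u} R} {x : R}
    (hx : IsSMulRegular M x) {i : ℕ} (h : Subsingleton (Ext N (ModuleCat.of R M) i))
    (h' : Subsingleton (Ext N (ModuleCat.of R M) (i + 1))) :
    Subsingleton (Ext N (ModuleCat.of R (QuotSMulTop x M)) i) :=
  AddCommGrpCat.subsingleton_of_isZero <| ShortComplex.Exact.isZero_of_both_zeros
    (Ext.covariant_sequence_exact₃' N
      (IsSMulRegular.smulShortComplex_shortExact (M := ModuleCat.of R M) hx) i (i + 1) rfl)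
    ((AddCommGrpCat.isZero_of_iff_subsingleton.mpr h).eq_zero_of_src _)
    ((AddCommGrpCat.isZero_of_iff_subsingleton.mpr h').eq_zero_of_tgt _)

variable [IsLocalRing R] [IsNoetherianRing R]

-- Prime avoidance changes `x` by an element of `(rs)` to make it regular; this can be undone once
-- the sequence is permuted so that `x` comes last.
theorem isWeaklyRegular_of_subsingleton_ext (N : ModuleCat.{u} R) [Module.Finite R N]
    {rs : List R} (hrs : ∀ r ∈ rs, r ∈ maximalIdeal R)
    (M : Type u) [AddCommGroup M] [Module R M] [Module.Finite R M]
    (hann : Module.annihilator R N ≤ Ideal.ofList rs ⊔ Module.annihilator R M)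
    (hext : ∀ i < rs.length, Subsingleton (Ext N (ModuleCat.of R M) i)) :
    IsWeaklyRegular M rs := by
  induction rs generalizing M with
  | nil => exact .nil R M
  | cons x rs ih =>
    have : Subsingleton (N →ₗ[R] M) :=
      (Ext.addEquiv₀.trans ModuleCat.homAddEquiv).symm.subsingleton_congr.mpr
        (hext 0 (by simp))
    obtain ⟨a, ha, hareg⟩ := IsSMulRegular.subsingleton_linearMap_iff.mp this
    obtain ⟨y, hy, hreg⟩ : ∃ y ∈ Ideal.ofList rs, IsSMulRegular M (x + y) :=
      exists_mem_isSMulRegular_add ⟨a, by simpa only [Ideal.ofList_cons] using hann ha, hareg⟩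
    refine isWeaklyRegular_cons_of_add hy hrs (.cons hreg (ih ?_ _ ?_ ?_))
    · exact fun r hr => hrs r (List.mem_cons_of_mem _ hr)
    · have hM := annihilator_sup_span_le_annihilator_quotSMulTop (M := M) (x + y)
      rw [sup_le_iff, Ideal.span_singleton_le_iff_mem] at hM
      refine hann.trans (sup_le ?_ (hM.1.trans le_sup_right))
      rw [Ideal.ofList_cons, sup_le_iff, Ideal.span_singleton_le_iff_mem]
      refine ⟨?_, le_sup_left⟩
      simpa only [add_sub_cancel_right] using
        sub_mem (Ideal.mem_sup_right hM.2) (Ideal.mem_sup_left hy)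
    · intro i hi
      exact subsingleton_ext_quotSMulTop hreg (hext i (by grind)) (hext (i + 1) (by grind))

theorem isWeaklyRegular_of_maximalIdeal_le_radical {as rs : List R} (has : IsRegular R as)
    (ham : ∀ a ∈ as, a ∈ maximalIdeal R) (hrs : ∀ r ∈ rs, r ∈ maximalIdeal R)
    (hlen : rs.length = as.length) (hrad : maximalIdeal R ≤ (Ideal.ofList rs).radical) :
    IsWeaklyRegular R rs := by
  let N := ModuleCat.of R (R ⧸ Ideal.ofList rs)
  have hsupp : Module.support R N ⊆ PrimeSpectrum.zeroLocus (maximalIdeal R) := by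
    rwa [Module.support_eq_zeroLocus, Ideal.annihilator_quotient,
      PrimeSpectrum.zeroLocus_subset_zeroLocus_iff]
  have hlt : maximalIdeal R • (⊤ : Submodule R R) < ⊤ := by
    rw [smul_eq_mul, Ideal.mul_top]
    exact Ne.lt_top (Ideal.IsPrime.ne_top inferInstance)
  refine isWeaklyRegular_of_subsingleton_ext N hrs R ?_ ?_
  · exact Ideal.annihilator_quotient.le.trans le_sup_left
  · rw [hlen]
    exact ModuleCat.subsingleton_ext_of_exists_isRegular _ N hsupp (ModuleCat.of R R) hlt as ham has

end RegularSequences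

section WeightedHomogeneous

variable {σ R M : Type*} [CommRing R] [AddCommGroup M] {q : σ → M}

theorem weightedHomogeneousComponent_mul {f : MvPolynomial σ R} {e : M}
    (hf : IsWeightedHomogeneous q f e) (p : MvPolynomial σ R) (d : M) :
    weightedHomogeneousComponent q d (p * f) = weightedHomogeneousComponent q (d - e) p * f := by
  classical
  induction p using MvPolynomial.induction_on' with
  | monomial a c =>
    have ha : IsWeightedHomogeneous q (monomial a c) (Finsupp.weight q a) :=
      isWeightedHomogeneous_monomial _ _ _ rfl
    rw [weightedHomogeneousComponent_of_mem ha, weightedHomogeneousComponent_of_mem (ha.mul hf),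
      ite_mul, zero_mul]
    exact if_congr sub_eq_iff_eq_add.symm rfl rfl
  | add p p' hp hp' => simp only [add_mul, map_add, hp, hp']

theorem isWeightedHomogeneous_aeval {τ : Type*} {w : τ → M} {g : τ → MvPolynomial σ R}
    (hg : ∀ i, IsWeightedHomogeneous q (g i) (w i)) {p : MvPolynomial τ R} {d : M}
    (hp : IsWeightedHomogeneous w p d) : IsWeightedHomogeneous q (aeval g p) d := by
  rw [aeval_def, eval₂_eq]
  refine IsWeightedHomogeneous.sum _ _ _ fun a ha => ?_
  rw [← hp (mem_support_iff.mp ha)]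
  exact (IsWeightedHomogeneous.prod _ _ _ fun i _ => (hg i).pow (a i)).C_mul _

variable (R) in
/-- The basis of the polynomials of weighted degree `d` by monomials. -/
def weightedMonomialBasis (q : σ → M) (d : M) :
    Module.Basis {a : σ →₀ ℕ | Finsupp.weight q a = d} R (weightedHomogeneousSubmodule R q d) :=
  (basisRestrictSupport R _).map
    (LinearEquiv.ofEq _ _ (weightedHomogeneousSubmodule_eq_finsupp_supported R q d).symm)

variable [LinearOrder M] [IsOrderedAddMonoid M]

theorem weight_eq_zero_iff_of_pos (hq : ∀ i, 0 < q i) {a : σ →₀ ℕ} :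
    Finsupp.weight q a = 0 ↔ a = 0 := by
  refine ⟨fun h => Finsupp.ext fun i => ?_, fun h => by rw [h, map_zero]⟩
  by_contra hi
  exact (hq i).not_ge (h ▸ Finsupp.le_weight_of_ne_zero (fun j => (hq j).le) hi)

theorem weightedHomogeneousComponent_zero_of_pos (hq : ∀ i, 0 < q i) (p : MvPolynomial σ R) :
    weightedHomogeneousComponent q 0 p = C (constantCoeff p) := by
  classical
  ext a
  simp only [coeff_weightedHomogeneousComponent, weight_eq_zero_iff_of_pos hq, coeff_C,
    constantCoeff_eq, eq_comm (a := a)]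
  exact ite_congr rfl (fun h => by rw [← h]) fun _ => rfl

theorem nsmul_le_weight (hq : ∀ i, 0 ≤ q i) (a : σ →₀ ℕ) (i : σ) :
    a i • q i ≤ Finsupp.weight q a := by
  have hnonneg : ∀ j ∈ a.support, 0 ≤ a j • q j := fun j _ => nsmul_nonneg (hq j) _
  rw [Finsupp.weight_apply]
  by_cases hi : i ∈ a.support
  · exact Finset.single_le_sum hnonneg hi
  · rw [Finsupp.notMem_support_iff.mp hi, zero_smul]
    exact Finset.sum_nonneg hnonneg

variable [Finite σ] [Archimedean M]

theorem finite_setOf_weight_eq (hq : ∀ i, 0 < q i) (d : M) :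
    {a : σ →₀ ℕ | Finsupp.weight q a = d}.Finite := by
  classical
  choose N hN using fun i => Archimedean.arch d (hq i)
  refine (Set.finite_Iic (Finsupp.equivFunOnFinite.symm N)).subset fun a ha i => ?_
  have hle : a i • q i ≤ N i • q i :=
    (nsmul_le_weight (fun j => (hq j).le) a i).trans (ha.le.trans (hN i))
  exact (nsmul_left_strictMono (hq i)).le_iff_le.mp hle

theorem finite_weightedHomogeneousSubmodule (hq : ∀ i, 0 < q i) (d : M) :
    Module.Finite R (weightedHomogeneousSubmodule R q d) := by
  have := (finite_setOf_weight_eq hq d).to_subtype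
  exact Module.Finite.of_basis (weightedMonomialBasis R q d)

end WeightedHomogeneous

section HomogeneousRegularSequences

open RingTheory.Sequence IsLocalRing

theorem isWeaklyRegular_concat_iff {A : Type*} [CommRing A] {rs : List A} {r : A} :
    IsWeaklyRegular A (rs ++ [r]) ↔
      IsWeaklyRegular A rs ∧ ∀ a, r * a ∈ Ideal.ofList rs → a ∈ Ideal.ofList rs := by
  rw [isWeaklyRegular_append_iff, isWeaklyRegular_singleton_iff,
    isSMulRegular_quotient_iff_mem_of_smul_mem, smul_eq_mul, Ideal.mul_top]
  rfl

theorem isWeaklyRegular_map_X {σ R : Type*} [CommRing R] {l : List σ} (hl : l.Nodup) :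
    IsWeaklyRegular (MvPolynomial σ R) (l.map (X : σ → MvPolynomial σ R)) := by
  induction l using List.reverseRecOn with
  | nil => exact .nil _ _
  | append_singleton l i ih =>
    rw [List.nodup_append] at hl
    rw [List.map_append, List.map_singleton, isWeaklyRegular_concat_iff]
    refine ⟨ih hl.1, fun p hp => ?_⟩
    have hspan : Ideal.ofList (l.map (X : σ → MvPolynomial σ R)) = Ideal.span (X '' {j | j ∈ l}) :=
      congrArg Ideal.span (Set.ext fun p => by simp)
    rw [hspan, mem_ideal_span_X_image] at hp ⊢
    intro a ha
    obtain ⟨j, hj, haj⟩ := hp (Finsupp.single i 1 + a) (by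
      rwa [mem_support_iff, coeff_X_mul, ← mem_support_iff])
    have hij : i ≠ j := fun h => hl.2.2 j hj i (List.mem_singleton_self i) h.symm
    exact ⟨j, hj, by simpa [hij] using haj⟩

variable {σ k M : Type*} [Field k]

theorem mem_idealOfVars_iff {p : MvPolynomial σ k} : p ∈ idealOfVars σ k ↔ constantCoeff p = 0 := by
  simpa [constantCoeff_eq, Finsupp.degree_eq_zero_iff] using mem_pow_idealOfVars_iff' 1 p

instance isPrime_idealOfVars : (idealOfVars σ k).IsPrime := by
  have hker : idealOfVars σ k = RingHom.ker constantCoeff := Ideal.ext fun _ => mem_idealOfVars_iff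
  exact hker ▸ RingHom.ker_isPrime _

variable [AddCommGroup M] [LinearOrder M] [IsOrderedAddMonoid M] {q : σ → M}

attribute [local instance] weightedGradedAlgebra

theorem mem_of_mul_mem_of_constantCoeff_ne_zero (hq : ∀ i, 0 < q i)
    {I : Ideal (MvPolynomial σ k)} (hI : I.IsHomogeneous (weightedHomogeneousSubmodule k q))
    {g s : MvPolynomial σ k} {d : M} (hg : IsWeightedHomogeneous q g d)
    (hs : constantCoeff s ≠ 0) (h : s * g ∈ I) : g ∈ I := by
  have hcomp := weightedHomogeneousComponent_mem_of_mem k q hI h d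
  rw [weightedHomogeneousComponent_mul hg, sub_self,
    weightedHomogeneousComponent_zero_of_pos hq] at hcomp
  exact (Ideal.unit_mul_mem_iff_mem I ((isUnit_iff_ne_zero.mpr hs).map C)).mp hcomp

theorem isWeaklyRegular_of_map_localization (hq : ∀ i, 0 < q i) {l : List (MvPolynomial σ k)}
    (hl : ∀ f ∈ l, SetLike.IsHomogeneousElem (weightedHomogeneousSubmodule k q) f)
    (h : IsWeaklyRegular (Localization.AtPrime (idealOfVars σ k))
      (l.map (algebraMap _ (Localization.AtPrime (idealOfVars σ k))))) :
    IsWeaklyRegular (MvPolynomial σ k) l := by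
  induction l using List.reverseRecOn with
  | nil => exact .nil _ _
  | append_singleton l f ih =>
    rw [List.map_append, List.map_singleton, isWeaklyRegular_concat_iff, ← Ideal.map_ofList] at h
    have hl' : ∀ f ∈ l, SetLike.IsHomogeneousElem (weightedHomogeneousSubmodule k q) f :=
      fun f hf => hl f (List.mem_append_left _ hf)
    obtain ⟨e, hf⟩ := hl f (by simp)
    have hI := Ideal.homogeneous_span _ {f | f ∈ l} hl'
    refine isWeaklyRegular_concat_iff.mpr ⟨ih hl' h.1, fun g hg => ?_⟩
    refine (mem_iff_weightedHomogeneousComponent_mem k q hI g).mpr fun d => ?_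
    have hgd : f * weightedHomogeneousComponent q d g ∈ Ideal.ofList l := by
      have := weightedHomogeneousComponent_mem_of_mem k q hI hg (d + e)
      rwa [mul_comm, weightedHomogeneousComponent_mul hf, add_sub_cancel_right, mul_comm] at this
    obtain ⟨s, hs, hsg⟩ := (IsLocalization.algebraMap_mem_map_algebraMap_iff
      (idealOfVars σ k).primeCompl _ _ _).mp
        (h.2 (algebraMap _ _ (weightedHomogeneousComponent q d g))
          (by rw [← map_mul]; exact Ideal.mem_map_of_mem _ hgd))
    exact mem_of_mul_mem_of_constantCoeff_ne_zero hq hI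
      (weightedHomogeneousComponent_isWeightedHomogeneous d g)
      (mem_idealOfVars_iff.not.mp hs) hsg

variable [Finite σ] [IsAlgClosed k]

theorem idealOfVars_le_radical {I : Ideal (MvPolynomial σ k)}
    (hI : ∀ x : σ → k, (∀ f ∈ I, eval x f = 0) → x = 0) : idealOfVars σ k ≤ I.radical := by
  rw [← vanishingIdeal_zeroLocus_eq_radical (K := k)]
  intro p hp x hx
  obtain rfl : x = 0 := hI x hx
  simpa only [aeval_zero, Algebra.algebraMap_self_apply] using mem_idealOfVars_iff.mp hp

theorem isWeaklyRegular_of_eval_eq_zero_iff (hq : ∀ i, 0 < q i) {l : List (MvPolynomial σ k)}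
    (hl : ∀ f ∈ l, SetLike.IsHomogeneousElem (weightedHomogeneousSubmodule k q) f)
    (hlen : l.length = Nat.card σ) (hzero : ∀ x : σ → k, (∀ f ∈ l, eval x f = 0) ↔ x = 0) :
    IsWeaklyRegular (MvPolynomial σ k) l := by
  have := Fintype.ofFinite σ
  let S := Localization.AtPrime (idealOfVars σ k)
  let vars : List (MvPolynomial σ k) := Finset.univ.toList.map X
  have mem_maximal {p : MvPolynomial σ k} (hp : p ∈ idealOfVars σ k) :
      algebraMap _ S p ∈ maximalIdeal S :=
    (IsLocalization.AtPrime.to_map_mem_maximal_iff S (idealOfVars σ k) p).mpr hp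
  have hvars : ∀ p ∈ vars, p ∈ idealOfVars σ k :=
    List.forall_mem_map.mpr fun i _ => Ideal.subset_span ⟨i, rfl⟩
  have hl0 : ∀ f ∈ l, f ∈ idealOfVars σ k := fun f hf => mem_idealOfVars_iff.mpr <| by
    simpa only [eval_zero] using (hzero 0).mpr rfl f hf
  refine isWeaklyRegular_of_map_localization hq hl
    (isWeaklyRegular_of_maximalIdeal_le_radical (as := vars.map (algebraMap _ S)) ?_
      (List.forall_mem_map.mpr fun p hp => mem_maximal (hvars p hp))
      (List.forall_mem_map.mpr fun f hf => mem_maximal (hl0 f hf)) ?_ ?_)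
  · exact (isWeaklyRegular_map_X (Finset.nodup_toList _)).isRegular_of_isLocalization_of_mem
      S (idealOfVars σ k) hvars
  · simp [vars, hlen]
  · rw [← Localization.AtPrime.map_eq_maximalIdeal, ← Ideal.map_ofList]
    refine (Ideal.map_mono (idealOfVars_le_radical fun x hx => ?_)).trans (Ideal.map_radical_le _)
    exact (hzero x).mp fun f hf => hx f (Ideal.subset_span hf)

end HomogeneousRegularSequences

section HilbertFunction

open Module RingTheory.Sequence

theorem finrank_map_add_finrank_inf_ker {k V V₂ : Type*} [DivisionRing k] [AddCommGroup V]
    [Module k V] [AddCommGroup V₂] [Module k V₂] (p : Submodule k V) [FiniteDimensional k p]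
    (φ : V →ₗ[k] V₂) :
    finrank k (p.map φ) + finrank k (p ⊓ LinearMap.ker φ : Submodule k V) = finrank k p := by
  have h := (φ.domRestrict p).finrank_range_add_finrank_ker
  rwa [LinearMap.range_domRestrict, LinearMap.ker_domRestrict,
    ← Submodule.finrank_map_subtype_eq p, Submodule.map_comap_subtype] at h

variable {σ k M : Type*} [Field k] [AddCommGroup M]

/-- The homogeneous component of weighted degree `d` of the quotient of a polynomial ring by an
ideal `I`: the image of the polynomials of weighted degree `d`. For the Jacobian ideal of `W` this
is `gradedPiece W q d`. -/
def quotientPiece (I : Ideal (MvPolynomial σ k)) (q : σ → M) (d : M) :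
    Submodule k (MvPolynomial σ k ⧸ I) :=
  (weightedHomogeneousSubmodule k q d).map (Ideal.Quotient.mkₐ k I).toLinearMap

variable {q : σ → M} {I : Ideal (MvPolynomial σ k)}

attribute [local instance] weightedGradedAlgebra

theorem quotientPiece_inf_ker_factor [DecidableEq M]
    (hI : I.IsHomogeneous (weightedHomogeneousSubmodule k q)) {f : MvPolynomial σ k} {e : M}
    (hf : IsWeightedHomogeneous q f e) (d : M) :
    quotientPiece I q d ⊓
        LinearMap.ker (Ideal.Quotient.factorₐ k (le_sup_left : I ≤ I ⊔ Ideal.span {f})).toLinearMap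
      = (quotientPiece I q (d - e)).map (LinearMap.mulLeft k (Ideal.Quotient.mk I f)) := by
  apply le_antisymm
  · rintro _ ⟨⟨p, hp, rfl⟩, hpker⟩
    have hp_mem : p ∈ I ⊔ Ideal.span {f} := Ideal.Quotient.eq_zero_iff_mem.mp hpker
    obtain ⟨r, hr, y, hy, rfl⟩ := Submodule.mem_sup.mp hp_mem
    obtain ⟨g, rfl⟩ := Ideal.mem_span_singleton'.mp hy
    refine ⟨_, ⟨_, weightedHomogeneousComponent_mem q g (d - e), rfl⟩, ?_⟩
    have hcomp := IsWeightedHomogeneous.weightedHomogeneousComponent_same hp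
    rw [map_add, weightedHomogeneousComponent_mul hf] at hcomp
    have hr_zero : Ideal.Quotient.mk I (weightedHomogeneousComponent q d r) = 0 :=
      Ideal.Quotient.eq_zero_iff_mem.mpr (weightedHomogeneousComponent_mem_of_mem k q hI hr d)
    change Ideal.Quotient.mk I f * Ideal.Quotient.mk I (weightedHomogeneousComponent q (d - e) g) =
      Ideal.Quotient.mk I (r + g * f)
    rw [← hcomp, map_add, hr_zero, zero_add, map_mul, mul_comm]
  · rintro _ ⟨_, ⟨g, hg, rfl⟩, rfl⟩
    refine ⟨⟨f * g, ?_, map_mul (Ideal.Quotient.mk I) f g⟩, ?_⟩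
    · exact add_sub_cancel e d ▸ hf.mul hg
    · exact Ideal.Quotient.eq_zero_iff_mem.mpr
        (Ideal.mem_sup_right (Ideal.mul_mem_right _ _ (Ideal.mem_span_singleton_self f)))

variable [Finite σ] [LinearOrder M] [IsOrderedAddMonoid M] [Archimedean M]

theorem finrank_quotientPiece_sup_span_add (hq : ∀ i, 0 < q i)
    (hI : I.IsHomogeneous (weightedHomogeneousSubmodule k q)) {f : MvPolynomial σ k} {e : M}
    (hf : IsWeightedHomogeneous q f e) (hreg : ∀ g, f * g ∈ I → g ∈ I) (d : M) :
    finrank k (quotientPiece (I ⊔ Ideal.span {f}) q d) + finrank k (quotientPiece I q (d - e)) =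
      finrank k (quotientPiece I q d) := by
  have := finite_weightedHomogeneousSubmodule (R := k) hq d
  have : FiniteDimensional k (quotientPiece I q d) := Module.Finite.map _ _
  let φ := (Ideal.Quotient.factorₐ k (le_sup_left : I ≤ I ⊔ Ideal.span {f})).toLinearMap
  let μ := LinearMap.mulLeft k (Ideal.Quotient.mk I f)
  have hφ : (quotientPiece I q d).map φ = quotientPiece (I ⊔ Ideal.span {f}) q d :=
    (Submodule.map_comp _ _ _).symm
  have hμ : Function.Injective μ := by
    rw [← LinearMap.ker_eq_bot, LinearMap.ker_eq_bot']
    intro x hx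
    obtain ⟨g, rfl⟩ := Ideal.Quotient.mk_surjective x
    exact Ideal.Quotient.eq_zero_iff_mem.mpr (hreg g (Ideal.Quotient.eq_zero_iff_mem.mp hx))
  rw [← finrank_map_add_finrank_inf_ker (quotientPiece I q d) φ, hφ,
    quotientPiece_inf_ker_factor hI hf, (Submodule.equivMapOfInjective μ hμ _).finrank_eq]

theorem finrank_quotientPiece_eq_of_isWeaklyRegular (hq : ∀ i, 0 < q i) {ι : Type*} {l : List ι}
    {f f' : ι → MvPolynomial σ k} {e : ι → M} (hf : ∀ i, IsWeightedHomogeneous q (f i) (e i))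
    (hf' : ∀ i, IsWeightedHomogeneous q (f' i) (e i))
    (hreg : IsWeaklyRegular (MvPolynomial σ k) (l.map f))
    (hreg' : IsWeaklyRegular (MvPolynomial σ k) (l.map f')) (d : M) :
    finrank k (quotientPiece (Ideal.ofList (l.map f)) q d) =
      finrank k (quotientPiece (Ideal.ofList (l.map f')) q d) := by
  induction l using List.reverseRecOn generalizing d with
  | nil => rfl
  | append_singleton l i ih =>
    have homogeneous {g : ι → MvPolynomial σ k} (hg : ∀ i, IsWeightedHomogeneous q (g i) (e i)) :
        (Ideal.ofList (l.map g)).IsHomogeneous (weightedHomogeneousSubmodule k q) :=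
      Ideal.homogeneous_span _ _ (List.forall_mem_map.mpr fun j _ => ⟨e j, hg j⟩)
    have ofList_concat (g : ι → MvPolynomial σ k) :
        Ideal.ofList ((l ++ [i]).map g) = Ideal.ofList (l.map g) ⊔ Ideal.span {g i} := by
      rw [List.map_append, List.map_singleton, Ideal.ofList_append, Ideal.ofList_singleton]
    rw [List.map_append, List.map_singleton, isWeaklyRegular_concat_iff] at hreg hreg'
    rw [ofList_concat, ofList_concat]
    have step := finrank_quotientPiece_sup_span_add hq (homogeneous hf) (hf i) hreg.2 d
    have step' := finrank_quotientPiece_sup_span_add hq (homogeneous hf') (hf' i) hreg'.2 d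
    have ih := ih hreg.1 hreg'.1
    rw [ih d, ← step', ih (d - e i)] at step
    exact Nat.add_right_cancel step

end HilbertFunction

section MilnorRing

variable {σ : Type*} {W W₁ W₂ : MvPolynomial σ ℂ} {q : σ → ℚ}

theorem gradedPiece_eq_bot_iff {d : ℚ} :
    gradedPiece W q d = ⊥ ↔ ∀ p, IsWeightedHomogeneous q p d → p ∈ jacobianIdeal W := by
  rw [eq_bot_iff, gradedPiece, Submodule.map_le_iff_le_comap]
  exact forall₂_congr fun p _ => Ideal.Quotient.eq_zero_iff_mem

variable [Fintype σ]

theorem IsQuasiHomogeneous.isWeightedHomogeneous (hW : IsQuasiHomogeneous W q) :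
    IsWeightedHomogeneous q W 1 := by
  intro a ha
  rw [← hW.2 a (mem_support_iff.mpr ha), Finsupp.weight_apply, Finsupp.sum_fintype _ _ (by simp)]
  simp only [nsmul_eq_mul]

theorem IsQuasiHomogeneous.pderiv (hW : IsQuasiHomogeneous W q) (i : σ) :
    IsWeightedHomogeneous q (pderiv i W) (1 - q i) :=
  hW.isWeightedHomogeneous.pderiv (sub_add_cancel _ _)

theorem jacobianIdeal_eq_ofList (W : MvPolynomial σ ℂ) :
    jacobianIdeal W = Ideal.ofList (Finset.univ.toList.map fun i => pderiv i W) :=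
  congrArg Ideal.span (Set.ext fun p => by simp)

theorem isWeaklyRegular_pderiv (hq : ∀ i, q i < 1) (hW : IsQuasiHomogeneous W q)
    (hnd : Nondegenerate W) :
    RingTheory.Sequence.IsWeaklyRegular (MvPolynomial σ ℂ)
      (Finset.univ.toList.map fun i => pderiv i W) := by
  refine isWeaklyRegular_of_eval_eq_zero_iff hW.1
    (List.forall_mem_map.mpr fun i _ => ⟨1 - q i, hW.pderiv i⟩) (by simp) fun x => ?_
  simp only [List.forall_mem_map, Finset.mem_toList, Finset.mem_univ, forall_const]
  refine ⟨hnd x, ?_⟩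
  rintro rfl i
  rw [eval_zero, constantCoeff_eq]
  exact (hW.pderiv i).coeff_eq_zero 0 (by simpa using (sub_pos.mpr (hq i)).ne)

theorem finrank_gradedPiece_eq (hq : ∀ i, q i < 1) (hW₁ : IsQuasiHomogeneous W₁ q)
    (hW₂ : IsQuasiHomogeneous W₂ q) (hnd₁ : Nondegenerate W₁) (hnd₂ : Nondegenerate W₂) (d : ℚ) :
    Module.finrank ℂ (gradedPiece W₁ q d) = Module.finrank ℂ (gradedPiece W₂ q d) := by
  change Module.finrank ℂ (quotientPiece (jacobianIdeal W₁) q d) =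
    Module.finrank ℂ (quotientPiece (jacobianIdeal W₂) q d)
  rw [jacobianIdeal_eq_ofList, jacobianIdeal_eq_ofList]
  exact finrank_quotientPiece_eq_of_isWeaklyRegular hW₁.1 hW₁.pderiv hW₂.pderiv
    (isWeaklyRegular_pderiv hq hW₁ hnd₁) (isWeaklyRegular_pderiv hq hW₂ hnd₂) d

theorem gradedPiece_eq_bot_of_eq_bot (hq : ∀ i, q i < 1) (hW₁ : IsQuasiHomogeneous W₁ q)
    (hW₂ : IsQuasiHomogeneous W₂ q) (hnd₁ : Nondegenerate W₁) (hnd₂ : Nondegenerate W₂) {d : ℚ}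
    (h : gradedPiece W₁ q d = ⊥) : gradedPiece W₂ q d = ⊥ := by
  have := finite_weightedHomogeneousSubmodule (R := ℂ) hW₂.1 d
  have : Module.Finite ℂ (gradedPiece W₂ q d) := Module.Finite.map _ _
  rw [← Submodule.finrank_eq_zero (R := ℂ), ← finrank_gradedPiece_eq hq hW₁ hW₂ hnd₁ hnd₂, h,
    finrank_bot]

end MilnorRing

section Displacement

variable {σ R : Type*} [CommRing R]

/-- The substitution `xᵢ ↦ xᵢ + vᵢ`, displacing the coordinates along a polynomial vector field
`v`. -/
def displacement (v : σ → MvPolynomial σ R) : MvPolynomial σ R →ₐ[R] MvPolynomial σ R :=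
  aeval fun i => X i + v i

theorem displacement_zero : displacement (0 : σ → MvPolynomial σ R) = AlgHom.id R _ :=
  algHom_ext fun i => by simp [displacement]

/-- The derivative `∑ᵢ vᵢ ∂p/∂xᵢ` of a polynomial `p` along a polynomial vector field `v`, as a
bilinear map of `p` and `v`. -/
def lieDerivative : MvPolynomial σ R →ₗ[R] (σ → MvPolynomial σ R) →ₗ[R] MvPolynomial σ R :=
  LinearMap.mk₂ R (fun p v => mkDerivation R v p) (fun _ _ _ => map_add _ _ _)
    (fun r p v => (mkDerivation R v).map_smul r p)
    (fun p v w => DFunLike.congr_fun ((mkDerivationEquiv R).map_add v w) p)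
    (fun r p v => DFunLike.congr_fun ((mkDerivationEquiv R).map_smul r v) p)

theorem lieDerivative_eq_mkDerivation (p : MvPolynomial σ R) (v : σ → MvPolynomial σ R) :
    lieDerivative p v = mkDerivation R v p :=
  rfl

theorem lieDerivative_mul_X (p : MvPolynomial σ R) (i : σ) (v : σ → MvPolynomial σ R) :
    lieDerivative (p * X i) v = lieDerivative p v * X i + p * v i := by
  simp only [lieDerivative_eq_mkDerivation, Derivation.leibniz, mkDerivation_X, smul_eq_mul]
  ring

theorem lieDerivative_eq_sum [Fintype σ] (p : MvPolynomial σ R) (v : σ → MvPolynomial σ R) :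
    lieDerivative p v = ∑ i, v i * pderiv i p := by
  classical
  have sum_apply (p : MvPolynomial σ R) : (∑ i, v i • pderiv i) p = ∑ i, v i * pderiv i p :=
    map_sum ((Pi.evalAddMonoidHom _ p).comp Derivation.coeFnAddMonoidHom)
      (fun i => v i • pderiv i) _
  have hv : mkDerivation R v = ∑ i, v i • pderiv i :=
    derivation_ext fun j => by simp [sum_apply, pderiv_X, Pi.single_apply]
  rw [lieDerivative_eq_mkDerivation, hv, sum_apply]

variable {M : Type*} [AddCommGroup M]

/-- The vector fields of weighted degree zero: `∂/∂xᵢ` has weight `-qᵢ`, so the `i`-th coefficient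
has weight `qᵢ`. -/
def weightedVectorFields (R : Type*) [CommRing R] (q : σ → M) :
    Submodule R (σ → MvPolynomial σ R) :=
  Submodule.pi Set.univ fun i => weightedHomogeneousSubmodule R q (q i)

theorem isWeightedHomogeneous_displacement {q : σ → M} {v : σ → MvPolynomial σ R}
    (hv : v ∈ weightedVectorFields R q) {p : MvPolynomial σ R} {d : M}
    (hp : IsWeightedHomogeneous q p d) : IsWeightedHomogeneous q (displacement v p) d :=
  isWeightedHomogeneous_aeval
    (fun i => (isWeightedHomogeneous_X R q i).add (hv i (Set.mem_univ i))) hp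

theorem fg_weightedVectorFields [Finite σ] [LinearOrder M] [IsOrderedAddMonoid M] [Archimedean M]
    {q : σ → M} (hq : ∀ i, 0 < q i) : (weightedVectorFields R q).FG :=
  Submodule.fg_pi fun i => Module.Finite.iff_fg.mp (finite_weightedHomogeneousSubmodule hq (q i))

/-- The coefficients of a polynomial at the monomials of weighted degree `d`. -/
def weightedCoeff (q : σ → M) (d : M) :
    MvPolynomial σ R →ₗ[R] {a : σ →₀ ℕ | Finsupp.weight q a = d} → R :=
  LinearMap.pi fun a => lcoeff R a

theorem weightedCoeff_injOn (q : σ → M) (d : M) :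
    Set.InjOn (weightedCoeff q d) {p : MvPolynomial σ R | IsWeightedHomogeneous q p d} := by
  intro p hp p' hp' h
  ext a
  by_cases ha : Finsupp.weight q a = d
  · exact congrFun h ⟨a, ha⟩
  · rw [hp.coeff_eq_zero a ha, hp'.coeff_eq_zero a ha]

theorem exists_isWeightedHomogeneous_weightedCoeff_eq {q : σ → M} {d : M}
    [Finite {a : σ →₀ ℕ | Finsupp.weight q a = d}]
    (v : {a : σ →₀ ℕ | Finsupp.weight q a = d} → R) :
    ∃ p, IsWeightedHomogeneous q p d ∧ weightedCoeff q d p = v := by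
  let b := weightedMonomialBasis R q d
  exact ⟨b.equivFun.symm v, (b.equivFun.symm v).2, b.equivFun.apply_symm_apply v⟩

/-- The coefficients in weighted degree `d` of the derivatives of `p` along the vector fields
parametrised by `L`: the differential at the identity of the orbit map of `p`. -/
def infinitesimalAction {E : Type*} [AddCommGroup E] [Module R E] (q : σ → M)
    (L : E →ₗ[R] σ → MvPolynomial σ R) (d : M) (p : MvPolynomial σ R) :
    E →ₗ[R] {a : σ →₀ ℕ | Finsupp.weight q a = d} → R :=
  weightedCoeff q d ∘ₗ lieDerivative p ∘ₗ L

theorem infinitesimalAction_add_smul {E : Type*} [AddCommGroup E] [Module R E] (q : σ → M)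
    (L : E →ₗ[R] σ → MvPolynomial σ R) (d : M) (p p' : MvPolynomial σ R) (t : R) :
    infinitesimalAction q L d (p + t • p') =
      infinitesimalAction q L d p + t • infinitesimalAction q L d p' := by
  simp only [infinitesimalAction, map_add, map_smul, LinearMap.add_comp, LinearMap.comp_add,
    LinearMap.smul_comp, LinearMap.comp_smul]

theorem injective_of_surjective_ringEnd {A : Type*} [CommRing A] [IsNoetherianRing A] {f : A →+* A}
    (hf : Function.Surjective f) : Function.Injective f := by
  let K : ℕ →o Ideal A := ⟨fun k => RingHom.ker (f ^ k), monotone_nat_of_le_succ fun k x hx => by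
    rw [RingHom.mem_ker] at hx ⊢
    rw [pow_succ', RingHom.mul_def, RingHom.comp_apply, hx, map_zero]⟩
  obtain ⟨k, hk⟩ := monotone_stabilizes_iff_noetherian.mpr (inferInstance : IsNoetherian A A) K
  rw [injective_iff_map_eq_zero]
  intro x hx
  obtain ⟨y, rfl⟩ := hf.iterate k x
  have hy : y ∈ K (k + 1) := by
    change (f ^ (k + 1)) y = 0
    rw [RingHom.coe_pow, Function.iterate_succ_apply', hx]
  rw [← hk (k + 1) k.le_succ] at hy
  rw [← RingHom.coe_pow]
  exact hy

theorem surjective_of_forall_X_mem_range {f : MvPolynomial σ R →ₐ[R] MvPolynomial σ R}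
    (hf : ∀ i, X i ∈ f.range) : Function.Surjective f := by
  rw [← AlgHom.range_eq_top, eq_top_iff, ← adjoin_range_X, Algebra.adjoin_le_iff]
  exact Set.range_subset_iff.mpr hf

end Displacement

section OpenOrbits

open Topology

variable {σ 𝕜 E M : Type*} [NontriviallyNormedField 𝕜] [CompleteSpace 𝕜] [NormedAddCommGroup E]
  [NormedSpace 𝕜 E] [FiniteDimensional 𝕜 E] (L : E →ₗ[𝕜] σ → MvPolynomial σ 𝕜)

theorem hasStrictFDerivAt_coeff_displacement (p : MvPolynomial σ 𝕜) (a : σ →₀ ℕ) :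
    HasStrictFDerivAt (fun c => coeff a (displacement (L c) p))
      (lcoeff 𝕜 a ∘ₗ lieDerivative p ∘ₗ L).toContinuousLinearMap 0 := by
  classical
  induction p using MvPolynomial.induction_on generalizing a with
  | C r =>
    simp only [algHom_C]
    refine (hasStrictFDerivAt_const _ _).congr_fderiv ?_
    ext c
    simp [lieDerivative_eq_mkDerivation]
  | add p p' hp hp' =>
    simp only [map_add, coeff_add]
    exact (hp a).add (hp' a)
  | mul_X p i hp =>
    have coeff_image_X (b : σ →₀ ℕ) : HasStrictFDerivAt (fun c => coeff b (X i + L c i))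
        (lcoeff 𝕜 b ∘ₗ LinearMap.proj i ∘ₗ L).toContinuousLinearMap 0 := by
      simp only [coeff_add]
      exact (lcoeff 𝕜 b ∘ₗ LinearMap.proj i ∘ₗ L).toContinuousLinearMap.hasStrictFDerivAt.const_add
        _
    have coeff_image_mul (c : E) : coeff a (displacement (L c) (p * X i)) =
        ∑ x ∈ Finset.HasAntidiagonal.antidiagonal a,
          coeff x.1 (displacement (L c) p) * coeff x.2 (X i + L c i) := by
      rw [map_mul, coeff_mul, displacement, aeval_X]
    simp only [coeff_image_mul]
    refine (HasStrictFDerivAt.fun_sum fun x _ => (hp x.1).mul (coeff_image_X x.2)).congr_fderiv ?_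
    ext c
    simp only [map_zero, displacement_zero, lieDerivative_mul_X, Pi.zero_apply, add_zero,
      LinearMap.coe_toContinuousLinearMap', LinearMap.comp_apply, coeff_add, lcoeff_apply,
      coeff_mul, _root_.sum_apply, _root_.add_apply, _root_.smul_apply, LinearMap.proj_apply,
      AlgHom.id_apply, smul_eq_mul, ← Finset.sum_add_distrib]
    exact Finset.sum_congr rfl fun x _ => by ring

variable [AddCommGroup M] {q : σ → M} {L}

theorem eventually_mem_range_displacement (hL : ∀ c, L c ∈ weightedVectorFields 𝕜 q) {d : M}
    [Finite {a : σ →₀ ℕ | Finsupp.weight q a = d}] {p : MvPolynomial σ 𝕜}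
    (hp : IsWeightedHomogeneous q p d) : ∀ᶠ c in 𝓝 0, p ∈ (displacement (L c)).range := by
  classical
  have := Fintype.ofFinite {a : σ →₀ ℕ | Finsupp.weight q a = d}
  let b := weightedMonomialBasis 𝕜 q d
  have := Module.Finite.of_basis b
  let T (c : E) : Module.End 𝕜 (weightedHomogeneousSubmodule 𝕜 q d) :=
    (displacement (L c)).toLinearMap.restrict fun _ => isWeightedHomogeneous_displacement (hL c)
  have hT : ContinuousAt (fun c => LinearMap.toMatrix b b (T c)) 0 :=
    continuousAt_pi.mpr fun a => continuousAt_pi.mpr fun a' => by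
      simp only [LinearMap.toMatrix_apply]
      exact (hasStrictFDerivAt_coeff_displacement L (b a') a).continuousAt
  have hT0 : T 0 = 1 := by
    ext x
    simp [T, displacement_zero]
  have hdet : ContinuousAt (fun c => LinearMap.det (T c)) 0 := by
    simp only [← LinearMap.det_toMatrix b]
    exact (continuous_id.matrix_det).continuousAt.comp hT
  filter_upwards [hdet.eventually_ne (by simp [hT0] : LinearMap.det (T 0) ≠ 0)] with c hc
  obtain ⟨x, hx⟩ := (LinearMap.equivOfDetNeZero _ hc).surjective ⟨p, hp⟩
  exact ⟨x, congrArg Subtype.val hx⟩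

variable [LinearOrder M] [IsOrderedAddMonoid M] [Archimedean M] [Finite σ]

theorem eventually_bijective_displacement (hq : ∀ i, 0 < q i)
    (hL : ∀ c, L c ∈ weightedVectorFields 𝕜 q) :
    ∀ᶠ c in 𝓝 0, Function.Bijective (displacement (L c)) := by
  have X_mem_range (i : σ) : ∀ᶠ c in 𝓝 0, X i ∈ (displacement (L c)).range := by
    have := (finite_setOf_weight_eq hq (q i)).to_subtype
    exact eventually_mem_range_displacement hL (isWeightedHomogeneous_X 𝕜 q i)
  filter_upwards [Filter.eventually_all.mpr X_mem_range] with c hc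
  have hsurj := surjective_of_forall_X_mem_range hc
  exact ⟨injective_of_surjective_ringEnd (f := (displacement (L c)).toRingHom) hsurj, hsurj⟩

theorem eventually_exists_algEquiv_weightedCoeff_eq (hq : ∀ i, 0 < q i)
    (hL : ∀ c, L c ∈ weightedVectorFields 𝕜 q) {d : M} {p : MvPolynomial σ 𝕜}
    (hp : IsWeightedHomogeneous q p d)
    (hsurj : Function.Surjective (infinitesimalAction q L d p)) :
    ∀ᶠ v in 𝓝 (weightedCoeff q d p), ∃ e : MvPolynomial σ 𝕜 ≃ₐ[𝕜] MvPolynomial σ 𝕜,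
      IsWeightedHomogeneous q (e p) d ∧ weightedCoeff q d (e p) = v := by
  have := (finite_setOf_weight_eq hq d).to_subtype
  have := Fintype.ofFinite {a : σ →₀ ℕ | Finsupp.weight q a = d}
  have := FiniteDimensional.complete 𝕜 E
  have hderiv : HasStrictFDerivAt (fun c => weightedCoeff q d (displacement (L c) p))
      (infinitesimalAction q L d p).toContinuousLinearMap 0 :=
    hasStrictFDerivAt_pi'.mpr fun a => hasStrictFDerivAt_coeff_displacement L p a
  have hnhds := hderiv.map_nhds_eq_of_surj (LinearMap.range_eq_top.mpr hsurj)
  rw [map_zero, displacement_zero, AlgHom.id_apply] at hnhds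
  rw [← hnhds, Filter.eventually_map]
  filter_upwards [eventually_bijective_displacement hq hL] with c hc
  exact ⟨AlgEquiv.ofBijective _ hc, isWeightedHomogeneous_displacement (hL c) hp, rfl⟩

theorem exists_algEquiv_apply_eq_of_isPreconnected (hq : ∀ i, 0 < q i)
    (hL : ∀ c, L c ∈ weightedVectorFields 𝕜 q) {d : M} {T : Type*} [TopologicalSpace T]
    {p : T → MvPolynomial σ 𝕜} (hp : ∀ t, IsWeightedHomogeneous q (p t) d)
    (hcont : Continuous fun t => weightedCoeff q d (p t)) {S : Set T} (hS : IsPreconnected S)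
    (hsurj : ∀ t ∈ S, Function.Surjective (infinitesimalAction q L d (p t))) {s t : T} (hs : s ∈ S)
    (ht : t ∈ S) : ∃ e : MvPolynomial σ 𝕜 ≃ₐ[𝕜] MvPolynomial σ 𝕜, e (p s) = p t := by
  refine hS.induction₂ (fun s t => ∃ e : MvPolynomial σ 𝕜 ≃ₐ[𝕜] MvPolynomial σ 𝕜, e (p s) = p t)
    ?_ ?_ ?_ hs ht
  · intro s hs
    refine Filter.Eventually.filter_mono nhdsWithin_le_nhds ?_
    have horbit := eventually_exists_algEquiv_weightedCoeff_eq hq hL (hp s) (hsurj s hs)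
    filter_upwards [(hcont.tendsto s).eventually horbit] with t ⟨e, he, hcoeff⟩
    exact ⟨e, weightedCoeff_injOn q d he (hp t) hcoeff⟩
  · rintro s t u _ _ _ ⟨e, he⟩ ⟨e', he'⟩
    exact ⟨e.trans e', by rw [AlgEquiv.trans_apply, he, he']⟩
  · rintro s t _ _ ⟨e, he⟩
    exact ⟨e.symm, by rw [← he, AlgEquiv.symm_apply_apply]⟩

end OpenOrbits

section LinearPencils

-- With `s` a section of `f`, failure of surjectivity makes `-t⁻¹` an eigenvalue of `g ∘ s`.
theorem finite_setOf_not_surjective_add_smul {k V F : Type*} [Field k] [AddCommGroup V] [Module k V]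
    [AddCommGroup F] [Module k F] [FiniteDimensional k F] {f : V →ₗ[k] F}
    (hf : Function.Surjective f) (g : V →ₗ[k] F) :
    {t : k | ¬Function.Surjective (f + t • g)}.Finite := by
  obtain ⟨s, hs⟩ := f.exists_rightInverse_of_surjective (LinearMap.range_eq_top.mpr hf)
  refine ((Module.End.finite_hasEigenvalue (g ∘ₗ s)).image fun μ => -μ⁻¹).subset fun t ht => ?_
  have hcomp : (f + t • g) ∘ₗ s = 1 + t • (g ∘ₗ s) := by
    rw [LinearMap.add_comp, hs, LinearMap.smul_comp]
    rfl
  have hnot_injective : ¬Function.Injective ((1 + t • (g ∘ₗ s) : Module.End k F)) := by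
    rw [LinearMap.injective_iff_surjective, ← hcomp]
    exact fun h => ht (Function.Surjective.of_comp h)
  rw [injective_iff_map_eq_zero] at hnot_injective
  push Not at hnot_injective
  obtain ⟨x, hx, hx0⟩ := hnot_injective
  have hx_neg : t • g (s x) = -x := eq_neg_of_add_eq_zero_right hx
  have ht0 : t ≠ 0 := by
    rintro rfl
    exact hx0 (by simpa using hx_neg)
  refine ⟨-t⁻¹, Module.End.hasEigenvalue_of_hasEigenvector (x := x) ⟨?_, hx0⟩, by simp⟩
  rw [Module.End.mem_eigenspace_iff, LinearMap.comp_apply, neg_smul, ← smul_neg, ← hx_neg,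
    inv_smul_smul₀ ht0]

variable {σ M : Type*} [Finite σ] [AddCommGroup M] [LinearOrder M] [IsOrderedAddMonoid M]
  [Archimedean M] {q : σ → M} {d : M}

theorem surjective_infinitesimalAction (hq : ∀ i, 0 < q i) {E : Type*} [AddCommGroup E]
    [Module ℂ E] {L : E →ₗ[ℂ] σ → MvPolynomial σ ℂ}
    (hL : LinearMap.range L = weightedVectorFields ℂ q) {W : MvPolynomial σ ℂ}
    (hW : IsWeightedHomogeneous q W d)
    (hjac : ∀ p, IsWeightedHomogeneous q p d → p ∈ jacobianIdeal W) :
    Function.Surjective (infinitesimalAction q L d W) := by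
  intro v
  have := Fintype.ofFinite σ
  have := (finite_setOf_weight_eq hq d).to_subtype
  obtain ⟨p, hp, rfl⟩ := exists_isWeightedHomogeneous_weightedCoeff_eq v
  obtain ⟨a, rfl⟩ := Ideal.mem_span_range_iff_exists_fun.mp (hjac p hp)
  have hmem : (fun i => weightedHomogeneousComponent q (q i) (a i)) ∈ LinearMap.range L :=
    hL ▸ fun i _ => weightedHomogeneousComponent_mem q (a i) (q i)
  obtain ⟨c, hc⟩ := hmem
  refine ⟨c, congrArg (weightedCoeff q d) ?_⟩
  calc lieDerivative W (L c)
      = ∑ i, weightedHomogeneousComponent q (q i) (a i) * pderiv i W := by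
        rw [lieDerivative_eq_sum, hc]
    _ = weightedHomogeneousComponent q d (∑ i, a i * pderiv i W) := by
        rw [map_sum]
        refine Finset.sum_congr rfl fun i _ => ?_
        rw [weightedHomogeneousComponent_mul (hW.pderiv (sub_add_cancel d (q i))), sub_sub_cancel]
    _ = ∑ i, a i * pderiv i W := hp.weightedHomogeneousComponent_same

theorem exists_algEquiv_apply_eq (hq : ∀ i, 0 < q i) {W₁ W₂ : MvPolynomial σ ℂ}
    (hW₁ : IsWeightedHomogeneous q W₁ d) (hW₂ : IsWeightedHomogeneous q W₂ d)
    (hjac₁ : ∀ p, IsWeightedHomogeneous q p d → p ∈ jacobianIdeal W₁)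
    (hjac₂ : ∀ p, IsWeightedHomogeneous q p d → p ∈ jacobianIdeal W₂) :
    ∃ e : MvPolynomial σ ℂ ≃ₐ[ℂ] MvPolynomial σ ℂ, e W₁ = W₂ := by
  obtain ⟨m, L, hL⟩ :=
    (Submodule.fg_iff_exists_fin_linearMap _ _).mp (fg_weightedVectorFields (R := ℂ) hq)
  have := (finite_setOf_weight_eq hq d).to_subtype
  let W (t : ℂ) : MvPolynomial σ ℂ := W₁ + t • (W₂ - W₁)
  have hW (t : ℂ) : IsWeightedHomogeneous q (W t) d :=
    Submodule.add_mem (weightedHomogeneousSubmodule ℂ q d) hW₁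
      (Submodule.smul_mem _ t (Submodule.sub_mem _ hW₂ hW₁))
  have hcont : Continuous fun t => weightedCoeff q d (W t) := by
    simp only [W, map_add, map_smul]
    fun_prop
  have hW_zero : W 0 = W₁ := by simp only [W, zero_smul, add_zero]
  have hW_one : W 1 = W₂ := by simp only [W, one_smul, add_sub_cancel]
  have hsurj₁ := surjective_infinitesimalAction hq hL hW₁ hjac₁
  have hsurj₂ := surjective_infinitesimalAction hq hL hW₂ hjac₂
  have hfinite : {t | ¬Function.Surjective (infinitesimalAction q L d (W t))}.Finite := by
    simp only [W, infinitesimalAction_add_smul]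
    exact finite_setOf_not_surjective_add_smul hsurj₁ _
  have hconn := hfinite.countable.isConnected_compl_of_one_lt_rank
    (Complex.rank_real_complex ▸ Nat.one_lt_ofNat)
  rw [← hW_zero, ← hW_one]
  exact exists_algEquiv_apply_eq_of_isPreconnected hq (fun c => hL ▸ LinearMap.mem_range_self L c)
    hW hcont hconn.isPreconnected (fun t ht => not_not.mp ht)
    (not_not.mpr (hW_zero.symm ▸ hsurj₁)) (not_not.mpr (hW_one.symm ▸ hsurj₂))

end LinearPencils

section CoordinateChanges

variable {σ : Type*}

theorem pderiv_aeval {R τ : Type*} [CommRing R] [Fintype σ] (g : σ → MvPolynomial τ R)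
    (p : MvPolynomial σ R) (j : τ) :
    pderiv j (aeval g p) = ∑ i, aeval g (pderiv i p) * pderiv j (g i) := by
  classical
  induction p using MvPolynomial.induction_on with
  | C r => simp
  | add p p' hp hp' => simp only [map_add, hp, hp', add_mul, Finset.sum_add_distrib]
  | mul_X p i hp =>
    have summand (l : σ) : aeval g (pderiv l (p * X i)) * pderiv j (g l) =
        aeval g (pderiv l p) * pderiv j (g l) * g i +
          if l = i then aeval g p * pderiv j (g i) else 0 := by
      split_ifs with h
      · subst h
        rw [pderiv_mul, pderiv_X_self, mul_one, map_add, map_mul, aeval_X]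
        ring
      · rw [pderiv_mul, pderiv_X_of_ne (Ne.symm h), mul_zero, add_zero, map_mul, aeval_X]
        ring
    rw [map_mul, aeval_X, pderiv_mul, hp, Finset.sum_mul]
    simp only [summand, Finset.sum_add_distrib, Finset.sum_ite_eq', Finset.mem_univ, if_true]

variable [Finite σ]

theorem jacobianIdeal_le_map (f : MvPolynomial σ ℂ →ₐ[ℂ] MvPolynomial σ ℂ) (W : MvPolynomial σ ℂ) :
    jacobianIdeal (f W) ≤ (jacobianIdeal W).map f := by
  have := Fintype.ofFinite σ
  refine Ideal.span_le.mpr (Set.range_subset_iff.mpr fun j => ?_)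
  have hchain := pderiv_aeval (f ∘ X) W j
  rw [← aeval_unique f] at hchain
  rw [hchain]
  exact Ideal.sum_mem _ fun i _ =>
    Ideal.mul_mem_right _ _ (Ideal.mem_map_of_mem f (Ideal.subset_span ⟨i, rfl⟩))

theorem jacobianIdeal_algEquiv (e : MvPolynomial σ ℂ ≃ₐ[ℂ] MvPolynomial σ ℂ)
    (W : MvPolynomial σ ℂ) :
    jacobianIdeal (e W) = (jacobianIdeal W).map (e : MvPolynomial σ ℂ →+* MvPolynomial σ ℂ) := by
  refine le_antisymm (jacobianIdeal_le_map e.toAlgHom W) ?_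
  have hsymm := jacobianIdeal_le_map e.symm.toAlgHom (e W)
  rw [Ideal.map_le_iff_le_comap]
  have hW : e.symm.toAlgHom (e W) = W := e.symm_apply_apply W
  rw [hW] at hsymm
  exact hsymm.trans (Ideal.map_symm (e : MvPolynomial σ ℂ ≃+* MvPolynomial σ ℂ)).le

/-- A change of coordinates taking `W` to `e W` induces an isomorphism of Milnor rings. -/
def milnorRingEquiv (e : MvPolynomial σ ℂ ≃ₐ[ℂ] MvPolynomial σ ℂ) (W : MvPolynomial σ ℂ) :
    MilnorRing W ≃ₐ[ℂ] MilnorRing (e W) :=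
  Ideal.quotientEquivAlg _ _ e (jacobianIdeal_algEquiv e W)

end CoordinateChanges

end LG


/-- Webb's Theorem: two nondegenerate quasihomogeneous
polynomials with the same ordered weights in `(0,1)` have isomorphic Milnor
rings, provided the weighted-degree-1 component of `Q_{W₁}` vanishes. -/
theorem webbs_theorem {n : ℕ}
    (W₁ W₂ : MvPolynomial (Fin n) ℂ) (q : Fin n → ℚ)
    (hq : ∀ i, 0 < q i ∧ q i < 1)
    (h₁ : Nondegenerate W₁) (h₂ : Nondegenerate W₂)
    (hqh₁ : IsQuasiHomogeneous W₁ q) (hqh₂ : IsQuasiHomogeneous W₂ q)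
    (hdeg1 : gradedPiece W₁ q 1 = ⊥) :
    Nonempty (MilnorRing W₁ ≃ₐ[ℂ] MilnorRing W₂) := by
  have hdeg1' : gradedPiece W₂ q 1 = ⊥ :=
    gradedPiece_eq_bot_of_eq_bot (fun i => (hq i).2) hqh₁ hqh₂ h₁ h₂ hdeg1
  obtain ⟨e, rfl⟩ := exists_algEquiv_apply_eq hqh₁.1 hqh₁.isWeightedHomogeneous
    hqh₂.isWeightedHomogeneous (gradedPiece_eq_bot_iff.mp hdeg1) (gradedPiece_eq_bot_iff.mp hdeg1')
  exact ⟨milnorRingEquiv e W₁⟩
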